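/- arXiv:1201.2803 — 2 statements merged into one kernel-verified Lean document; each statement's English description precedes it below -/
import Mathlib

section
/- Let C = {C_1,…,C_K} be a clustering of {1,…,n} and let A(t), t ≥ 0, be a sequence of n×n stochastic matrices satisfying: (B1) there exists e > 0 such that for all i, j, t, either A_{ij}(t) = 0 or A_{ij}(t) ≥ e; (B2) A_{ii}(t) ≥ e for all i and t; (B3*, static inter-cluster common influence) there exists a K×K stochastic matrix B = [b_{pq}] such that Σ_{j∈C_q} A_{ij}(t) = b_{pq} for all t ≥ 0, all i ∈ C_p and all p, q. Suppose there exists an integer L > 0 such that for every t ≥ 0 the matrix Σ_{s=t}^{t+L−1} A(s) has cluster-spanning-trees w.r.t. C. Let u : ℕ → ℝ be such that both |u(t)| and |Σ_{k=0}^{t} u(k)| are bounded over t, let α_1,…,α_K ∈ ℝ, and define the input I(t) ∈ ℝ^n by I_i(t) = α_p u(t) for i ∈ C_p. Then every solution of x(t+1) = A(t) x(t) + I(t) is bounded: sup_t max_i |x_i(t)| < ∞. -/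
open Finset Filter Topology Matrix

/-- An `n × n` real matrix is stochastic if all entries are nonnegative and
every row sums to `1`. -/
def IsStochastic {n : ℕ} (A : Matrix (Fin n) (Fin n) ℝ) : Prop :=
  (∀ i j, 0 ≤ A i j) ∧ ∀ i, ∑ j, A i j = 1

/-- A clustering of `{1,…,n}`: pairwise disjoint subsets whose union is everything. -/
def IsClustering {n K : ℕ} (C : Fin K → Finset (Fin n)) : Prop :=
  (∀ p q, p ≠ q → Disjoint (C p) (C q)) ∧ ∀ i, ∃ p, i ∈ C p

/-- Reachability along directed edges of `G(A)`: edge from `j` to `i` iff `A i j > 0`. -/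
def Reaches {n : ℕ} (A : Matrix (Fin n) (Fin n) ℝ) : Fin n → Fin n → Prop :=
  Relation.ReflTransGen fun j i => 0 < A i j

/-- `A` has cluster-spanning-trees w.r.t. `C`: for each cluster there is a vertex from
which every vertex of the cluster is reachable in `G(A)`. -/
def HasClusterSpanningTrees {n K : ℕ} (C : Fin K → Finset (Fin n))
    (A : Matrix (Fin n) (Fin n) ℝ) : Prop :=
  ∀ p, ∃ v, ∀ i ∈ C p, Reaches A v i

/-- Inter-cluster common influence: `∑_{j ∈ C q} A i j` is the same for all `i ∈ C p`. -/
def InterClusterCommonInfluence {n K : ℕ} (C : Fin K → Finset (Fin n))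
    (A : Matrix (Fin n) (Fin n) ℝ) : Prop :=
  ∀ p q, ∀ i ∈ C p, ∀ i' ∈ C p, ∑ j ∈ C q, A i j = ∑ j ∈ C q, A i' j

/-- Cluster ergodicity coefficient
`μ_C(A) = min_p min_{i,j ∈ C p} ∑_k min (A i k) (A j k)`. -/
noncomputable def muC {n K : ℕ} (C : Fin K → Finset (Fin n))
    (A : Matrix (Fin n) (Fin n) ℝ) : ℝ :=
  sInf {s | ∃ p, ∃ i ∈ C p, ∃ j ∈ C p, s = ∑ k, min (A i k) (A j k)}

/-- Cluster Hajnal diameter `Δ_C(A) = max_p max_{i,j ∈ C p} max_k |A i k - A j k|`. -/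
noncomputable def DeltaC {n K : ℕ} (C : Fin K → Finset (Fin n))
    (A : Matrix (Fin n) (Fin n) ℝ) : ℝ :=
  sSup {d | ∃ p, ∃ i ∈ C p, ∃ j ∈ C p, ∃ k, d = |A i k - A j k|}

/-- The cluster-consensus subspace `S_C`. -/
def SC {n K : ℕ} (C : Fin K → Finset (Fin n)) : Set (Fin n → ℝ) :=
  {x | ∀ p, ∀ i ∈ C p, ∀ j ∈ C p, x i = x j}

/-- Left product `prodFrom A a m = A (a+m-1) * ⋯ * A (a+1) * A a` (with `m` factors). -/
def prodFrom {n : ℕ} (A : ℕ → Matrix (Fin n) (Fin n) ℝ) (a : ℕ) :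
    ℕ → Matrix (Fin n) (Fin n) ℝ
  | 0 => 1
  | m + 1 => A (a + m) * prodFrom A a m

section AveragedMaps

variable {E : Type*} [NormedAddCommGroup E] [NormedSpace ℝ E]
  {q : E → E} {x : ℕ → E} {θ : ℝ}

lemma norm_step_of_averaged (hθ : 0 ≤ θ)
    (hx : ∀ m, x (m + 1) = (1 - θ) • x m + θ • q (x m)) (m : ℕ) :
    ‖x (m + 1) - x m‖ = θ * ‖q (x m) - x m‖ := by
  have : x (m + 1) - x m = θ • (q (x m) - x m) := by rw [hx]; module
  rw [this, norm_smul, Real.norm_of_nonneg hθ]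

lemma antitone_residual_of_averaged (hq : ∀ a b, ‖q a - q b‖ ≤ ‖a - b‖) (hθ : 0 ≤ θ)
    (hθ1 : θ < 1) (hx : ∀ m, x (m + 1) = (1 - θ) • x m + θ • q (x m)) :
    Antitone fun m => ‖q (x m) - x m‖ := by
  refine antitone_nat_of_succ_le fun m => ?_
  have key : q (x (m + 1)) - x (m + 1)
      = (q (x (m + 1)) - q (x m)) + (1 - θ) • (q (x m) - x m) := by
    rw [hx m]; module
  have h1 := norm_add_le (q (x (m + 1)) - q (x m)) ((1 - θ) • (q (x m) - x m))
  rw [← key, norm_smul, Real.norm_of_nonneg (by linarith)] at h1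
  have h2 := hq (x (m + 1)) (x m)
  rw [norm_step_of_averaged hθ hx] at h2
  linarith

lemma norm_sub_le_of_averaged (hq : ∀ a b, ‖q a - q b‖ ≤ ‖a - b‖) (hθ : 0 ≤ θ)
    (hθ1 : θ < 1) (hx : ∀ m, x (m + 1) = (1 - θ) • x m + θ • q (x m)) (k m : ℕ) :
    ‖x (m + k) - x m‖ ≤ k * (θ * ‖q (x m) - x m‖) := by
  induction k with
  | zero => simp
  | succ k ih =>
    have h1 := norm_sub_le_norm_sub_add_norm_sub (x (m + k + 1)) (x (m + k)) (x m)
    have h2 := norm_step_of_averaged hθ hx (m + k)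
    have h3 := antitone_residual_of_averaged hq hθ hθ1 hx (Nat.le_add_right m k)
    have h4 := mul_le_mul_of_nonneg_left h3 hθ
    simp only at h4
    push_cast
    rw [← add_assoc]
    linarith

/-- The Goebel–Kirk inequality for averaged iterations of a nonexpansive map. -/
lemma goebel_kirk_inequality (hq : ∀ a b, ‖q a - q b‖ ≤ ‖a - b‖) (hθ : 0 ≤ θ)
    (hθ1 : θ < 1) (hx : ∀ m, x (m + 1) = (1 - θ) • x m + θ • q (x m)) (k m : ℕ) :
    (1 + k * θ) * ‖q (x m) - x m‖
        + ((1 - θ)⁻¹) ^ k * (‖q (x (m + k)) - x (m + k)‖ - ‖q (x m) - x m‖)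
      ≤ ‖q (x (m + k)) - x m‖ := by
  induction k generalizing m with
  | zero => simp
  | succ k ih =>
    have hs : 0 < 1 - θ := by linarith
    have ih' := ih (m + 1)
    rw [show m + 1 + k = m + (k + 1) by ring] at ih'
    have key : q (x (m + (k + 1))) - x (m + 1)
        = (1 - θ) • (q (x (m + (k + 1))) - x m) + θ • (q (x (m + (k + 1))) - q (x m)) := by
      rw [hx m]; module
    have h1 := norm_add_le ((1 - θ) • (q (x (m + (k + 1))) - x m))
      (θ • (q (x (m + (k + 1))) - q (x m)))
    rw [← key, norm_smul, norm_smul, Real.norm_of_nonneg hs.le, Real.norm_of_nonneg hθ] at h1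
    have h2 := (hq (x (m + (k + 1))) (x m)).trans
      (norm_sub_le_of_averaged hq hθ hθ1 hx (k + 1) m)
    have h2' := mul_le_mul_of_nonneg_left h2 hθ
    have h3 := antitone_residual_of_averaged hq hθ hθ1 hx (Nat.le_add_right m 1)
    simp only at h3
    have hinv : 1 + θ ≤ (1 - θ)⁻¹ := by
      rw [← one_div, le_div_iff₀ hs]; nlinarith
    have hbern : 1 + k * θ ≤ ((1 - θ)⁻¹) ^ k :=
      (one_add_mul_le_pow (by linarith) k).trans (pow_le_pow_left₀ (by linarith) hinv k)
    have h4 := mul_le_mul_of_nonneg_left h3 (sub_nonneg.2 hbern)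
    rw [pow_succ]
    refine le_of_mul_le_mul_left ?_ hs
    have hcancel : ∀ P r : ℝ, (1 - θ) * (P * (1 - θ)⁻¹ * r) = P * r := by
      intro P r; field_simp
    rw [mul_add, hcancel]
    push_cast at h2' ⊢
    nlinarith

/-- Averaged iterations with bounded displacement are asymptotically regular. -/
lemma tendsto_residual_of_averaged (hq : ∀ a b, ‖q a - q b‖ ≤ ‖a - b‖) (hθ : 0 < θ)
    (hθ1 : θ < 1) (hx : ∀ m, x (m + 1) = (1 - θ) • x m + θ • q (x m)) {R : ℝ}
    (hR : ∀ m k, ‖q (x (m + k)) - x m‖ ≤ R) :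
    Tendsto (fun m => ‖q (x m) - x m‖) atTop (𝓝 0) := by
  have hlim := tendsto_atTop_ciInf (antitone_residual_of_averaged hq hθ.le hθ1 hx)
    ⟨0, by rintro _ ⟨m, rfl⟩; exact norm_nonneg _⟩
  set d := ⨅ m, ‖q (x m) - x m‖
  have hd0 : 0 ≤ d := ge_of_tendsto' hlim fun m => norm_nonneg _
  have hd (k : ℕ) : (1 + k * θ) * d ≤ R := by
    have hk := hlim.comp (tendsto_add_atTop_nat k)
    have h := (hlim.const_mul (1 + k * θ)).add ((hk.sub hlim).const_mul (((1 - θ)⁻¹) ^ k))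
    rw [sub_self, mul_zero, add_zero] at h
    exact le_of_tendsto' h fun m =>
      (goebel_kirk_inequality hq hθ.le hθ1 hx k m).trans (hR m k)
  have : d = 0 := by
    by_contra hne
    have hpos : 0 < θ * d := mul_pos hθ (lt_of_le_of_ne hd0 (Ne.symm hne))
    obtain ⟨k, hk⟩ := exists_nat_gt (R / (θ * d))
    rw [div_lt_iff₀ hpos] at hk
    nlinarith [hd k]
  rwa [this] at hlim

end AveragedMaps

lemma norm_pow_le_norm_one {R : Type*} [NormedRing R] {a : R} (ha : ‖a‖ ≤ 1) (m : ℕ) :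
    ‖a ^ m‖ ≤ ‖(1 : R)‖ := by
  induction m with
  | zero => simp
  | succ m ih =>
    rw [pow_succ']
    exact (norm_mul_le _ _).trans ((mul_le_of_le_one_left (norm_nonneg _) ha).trans ih)

lemma tendsto_pow_mul_sub_one_of_averaged {R : Type*} [NormedRing R] [NormedAlgebra ℝ R]
    {T Q : R} {θ : ℝ} (hθ : 0 < θ) (hθ1 : θ < 1) (hQ : ‖Q‖ ≤ 1) (hT1 : ‖T‖ ≤ 1)
    (hT : T = (1 - θ) • 1 + θ • Q) :
    Tendsto (fun m => T ^ m * (T - 1)) atTop (𝓝 0) := by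
  have hmul (a : R) : ‖Q * a‖ ≤ ‖a‖ :=
    (norm_mul_le _ _).trans (mul_le_of_le_one_left (norm_nonneg _) hQ)
  have hx (m : ℕ) : T ^ (m + 1) = (1 - θ) • T ^ m + θ • (Q * T ^ m) := by
    rw [pow_succ']
    nth_rewrite 1 [hT]
    simp [add_mul]
  have h := tendsto_residual_of_averaged (q := fun a => Q * a) (x := fun m => T ^ m)
    (R := ‖(1 : R)‖ + ‖(1 : R)‖) (fun a b => by rw [← mul_sub]; exact hmul _) hθ hθ1 hx
    (fun m k => (norm_sub_le _ _).trans (add_le_add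
      ((hmul _).trans (norm_pow_le_norm_one hT1 _)) (norm_pow_le_norm_one hT1 _)))
  rw [tendsto_zero_iff_norm_tendsto_zero]
  have h' := h.const_mul θ
  rw [mul_zero] at h'
  refine h'.congr fun m => ?_
  rw [← norm_step_of_averaged (q := fun a => Q * a) (x := fun m => T ^ m) hθ.le hx, mul_sub,
    mul_one, pow_succ]

lemma LinearMap.exists_comp_comp_eq_self {k V : Type*} [Field k] [AddCommGroup V] [Module k V]
    (D : V →ₗ[k] V) : ∃ G : V →ₗ[k] V, ∀ v, D (G (D v)) = D v := by
  obtain ⟨s, hs⟩ := D.rangeRestrict.exists_rightInverse_of_surjective D.range_rangeRestrict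
  obtain ⟨G, hG⟩ := LinearMap.exists_extend s
  refine ⟨G, fun v => ?_⟩
  have h1 : G (D v) = s (D.rangeRestrict v) := LinearMap.congr_fun hG (D.rangeRestrict v)
  have h2 := LinearMap.congr_fun hs (D.rangeRestrict v)
  rw [h1]
  exact congrArg Subtype.val h2

lemma sum_range_le_of_half_contraction {f : ℕ → ℝ} {c : ℝ} {N : ℕ} (hf : ∀ m, 0 ≤ f m)
    (hc : ∀ m, f m ≤ c) (hN : ∀ m, f (N + m) ≤ f m / 2) (t : ℕ) :
    ∑ j ∈ Finset.range t, f j ≤ 2 * (N * c) := by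
  have h1 : ∑ j ∈ Finset.range t, f j ≤ ∑ j ∈ Finset.range (N + t), f j :=
    Finset.sum_le_sum_of_subset_of_nonneg
      (Finset.range_mono (Nat.le_add_left t N)) fun j _ _ => hf j
  have h2 : ∑ j ∈ Finset.range N, f j ≤ N * c := by
    simpa using Finset.sum_le_sum fun j (_ : j ∈ Finset.range N) => hc j
  have h3 : ∑ j ∈ Finset.range t, f (N + j) ≤ (∑ j ∈ Finset.range t, f j) / 2 := by
    rw [Finset.sum_div]
    exact Finset.sum_le_sum fun j _ => hN j
  rw [Finset.sum_range_add] at h1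
  linarith

/-- In finite dimension, if `T ^ m * (T - 1) → 0` then these norms have bounded partial sums. -/
lemma exists_sum_norm_pow_mul_sub_one_le {V : Type*} [NormedAddCommGroup V] [NormedSpace ℝ V]
    [FiniteDimensional ℝ V] {T : V →L[ℝ] V} (hT1 : ‖T‖ ≤ 1)
    (hT : Tendsto (fun m => T ^ m * (T - 1)) atTop (𝓝 0)) :
    ∃ S : ℝ, ∀ t, ∑ j ∈ Finset.range t, ‖T ^ j * (T - 1)‖ ≤ S := by
  obtain ⟨G', hG'⟩ := LinearMap.exists_comp_comp_eq_self ((T - 1 : V →L[ℝ] V) : V →ₗ[ℝ] V)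
  set G : V →L[ℝ] V := LinearMap.toContinuousLinearMap G'
  have hG : (T - 1) * G * (T - 1) = T - 1 := by
    ext v
    exact hG' v
  have hG0 : Tendsto (fun m => ‖T ^ m * (T - 1) * G‖) atTop (𝓝 0) := by
    simpa using (hT.mul_const G).norm
  obtain ⟨N, hN⟩ := (hG0.eventually (gt_mem_nhds (by norm_num : (0 : ℝ) < 1 / 2))).exists
  refine ⟨_, sum_range_le_of_half_contraction (c := ‖(1 : V →L[ℝ] V)‖ * ‖T - 1‖) (N := N)
    (fun m => norm_nonneg _) (fun m => (norm_mul_le _ _).trans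
      (mul_le_mul_of_nonneg_right (norm_pow_le_norm_one hT1 m) (norm_nonneg _))) fun m => ?_⟩
  have hcomm : Commute (T ^ m) (T - 1) :=
    ((Commute.refl T).pow_left m).sub_right (Commute.one_right _)
  have key : T ^ (N + m) * (T - 1) = T ^ N * (T - 1) * G * (T ^ m * (T - 1)) := by
    calc T ^ (N + m) * (T - 1) = T ^ N * (((T - 1) * G * (T - 1)) * T ^ m) := by
          rw [hG, pow_add, mul_assoc, hcomm.eq]
      _ = T ^ N * (T - 1) * G * (T ^ m * (T - 1)) := by
          rw [hcomm.eq]; simp only [mul_assoc]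
  rw [key]
  refine (norm_mul_le _ _).trans ?_
  nlinarith [norm_nonneg (T ^ m * (T - 1))]

/-- If `T ^ m * (T - 1)` is absolutely summable, an input along a fixed direction with bounded
partial sums keeps the response of `y (t + 1) = T (y t) + u t • a` from zero bounded. -/
lemma exists_norm_response_le {V : Type*} [NormedAddCommGroup V] [NormedSpace ℝ V]
    {T : V →L[ℝ] V} {S : ℝ}
    (hS : ∀ t, ∑ j ∈ Finset.range t, ‖T ^ j * (T - 1)‖ ≤ S) {u : ℕ → ℝ} {Y : ℝ}
    (hsum : ∀ t, |∑ k ∈ Finset.range t, u k| ≤ Y) (a : V) {y : ℕ → V} (hy0 : y 0 = 0)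
    (hy : ∀ t, y (t + 1) = T (y t) + u t • a) :
    ∃ R : ℝ, ∀ t, ‖y t‖ ≤ R := by
  have hY : 0 ≤ Y := (abs_nonneg _).trans (hsum 0)
  have hrep (t : ℕ) : y t = (∑ k ∈ Finset.range t, u k) • a
      + ∑ j ∈ Finset.range t,
        (∑ k ∈ Finset.range (t - 1 - j), u k) • (T ^ j * (T - 1)) a := by
    induction t with
    | zero => simp [hy0]
    | succ t ih =>
      rw [hy, ih, Finset.sum_range_succ u t, Finset.sum_range_succ' _ t, map_add, map_smul,
        map_sum]
      have h (j : ℕ) : T ((∑ k ∈ Finset.range (t - 1 - j), u k) • (T ^ j * (T - 1)) a)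
          = (∑ k ∈ Finset.range (t + 1 - 1 - (j + 1)), u k) • (T ^ (j + 1) * (T - 1)) a := by
        rw [map_smul, pow_succ', show t + 1 - 1 - (j + 1) = t - 1 - j by omega]
        rfl
      simp only [h]
      simp only [pow_zero, one_mul, Nat.add_sub_cancel, Nat.sub_zero,
        _root_.sub_apply, one_apply_eq_self]
      module
  refine ⟨Y * ‖a‖ + Y * ‖a‖ * S, fun t => ?_⟩
  rw [hrep]
  refine (norm_add_le _ _).trans (add_le_add ?_ ?_)
  · rw [norm_smul]
    exact mul_le_mul_of_nonneg_right (hsum t) (norm_nonneg _)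
  · calc _ ≤ ∑ j ∈ Finset.range t, Y * ‖a‖ * ‖T ^ j * (T - 1)‖ := by
          refine norm_sum_le_of_le _ fun j _ => ?_
          rw [norm_smul, mul_assoc, mul_comm ‖a‖]
          exact mul_le_mul (hsum _) ((T ^ j * (T - 1)).le_opNorm a) (norm_nonneg _) hY
      _ ≤ _ := by
          rw [← Finset.mul_sum]
          exact mul_le_mul_of_nonneg_left (hS t) (by positivity)

lemma IsStochastic.norm_mulVec_le {n : ℕ} {A : Matrix (Fin n) (Fin n) ℝ} (hA : IsStochastic A)
    (v : Fin n → ℝ) : ‖A *ᵥ v‖ ≤ ‖v‖ := by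
  refine (pi_norm_le_iff_of_nonneg (norm_nonneg _)).2 fun i => ?_
  calc ‖∑ j, A i j * v j‖ ≤ ∑ j, A i j * ‖v‖ := by
        refine norm_sum_le_of_le _ fun j _ => ?_
        rw [norm_mul, Real.norm_of_nonneg (hA.1 i j)]
        exact mul_le_mul_of_nonneg_left (norm_le_pi_norm v j) (hA.1 i j)
    _ = ‖v‖ := by rw [← Finset.sum_mul, hA.2, one_mul]

lemma IsStochastic.norm_toContinuousLinearMap_le {n : ℕ} {A : Matrix (Fin n) (Fin n) ℝ}
    (hA : IsStochastic A) : ‖LinearMap.toContinuousLinearMap A.mulVecLin‖ ≤ 1 :=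
  ContinuousLinearMap.opNorm_le_bound _ zero_le_one fun v => by
    rw [one_mul]
    exact hA.norm_mulVec_le v

/-- A stochastic matrix with diagonal at least `ε` is a convex combination of the identity
and a stochastic matrix. -/
lemma IsStochastic.exists_averaged {n : ℕ} {A : Matrix (Fin n) (Fin n) ℝ}
    (hA : IsStochastic A) {ε : ℝ} (hε1 : ε < 1) (hdiag : ∀ i, ε ≤ A i i) :
    ∃ Q, IsStochastic Q ∧ A = ε • (1 : Matrix (Fin n) (Fin n) ℝ) + (1 - ε) • Q := by
  have hs : 0 < 1 - ε := by linarith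
  refine ⟨(1 - ε)⁻¹ • (A - ε • 1), ⟨fun i j => ?_, fun i => ?_⟩, ?_⟩
  · have : 0 ≤ A i j - ε * (1 : Matrix (Fin n) (Fin n) ℝ) i j := by
      rcases eq_or_ne i j with rfl | hij
      · simpa using hdiag i
      · simpa [hij] using hA.1 i j
    exact mul_nonneg (inv_nonneg.2 hs.le) this
  · simp only [Matrix.smul_apply, Matrix.sub_apply, smul_eq_mul, ← Finset.mul_sum,
      Finset.sum_sub_distrib, hA.2, Matrix.one_apply, Finset.sum_ite_eq, Finset.mem_univ, if_true,
      mul_one]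
    exact inv_mul_cancel₀ hs.ne'
  · rw [smul_inv_smul₀ hs.ne']
    abel

lemma IsStochastic.exists_sum_norm_le {n : ℕ} {A : Matrix (Fin n) (Fin n) ℝ}
    (hA : IsStochastic A) {ε : ℝ} (hε : 0 < ε) (hε1 : ε < 1) (hdiag : ∀ i, ε ≤ A i i) :
    ∃ S : ℝ, ∀ t, ∑ j ∈ Finset.range t, ‖LinearMap.toContinuousLinearMap A.mulVecLin ^ j *
      (LinearMap.toContinuousLinearMap A.mulVecLin - 1)‖ ≤ S := by
  obtain ⟨Q, hQ, hAQ⟩ := hA.exists_averaged hε1 hdiag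
  refine exists_sum_norm_pow_mul_sub_one_le hA.norm_toContinuousLinearMap_le
    (tendsto_pow_mul_sub_one_of_averaged (θ := 1 - ε) (by linarith) (by linarith)
      hQ.norm_toContinuousLinearMap_le hA.norm_toContinuousLinearMap_le ?_)
  refine ContinuousLinearMap.ext fun v => ?_
  change A *ᵥ v = (1 - (1 - ε)) • v + (1 - ε) • (Q *ᵥ v)
  conv_lhs => rw [hAQ]
  rw [Matrix.add_mulVec, Matrix.smul_mulVec, Matrix.smul_mulVec, Matrix.one_mulVec, sub_sub_cancel]

/-- A matrix whose block row sums are given by `B` acts on cluster-constant vectors through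
`B`. -/
lemma mulVec_clusterConstant {n K : ℕ} {C : Fin K → Finset (Fin n)} {c : Fin n → Fin K}
    (hc : ∀ i p, i ∈ C p ↔ c i = p) {A : Matrix (Fin n) (Fin n) ℝ}
    {B : Matrix (Fin K) (Fin K) ℝ} (hB : ∀ p q, ∀ i ∈ C p, ∑ j ∈ C q, A i j = B p q)
    (β : Fin K → ℝ) : A *ᵥ (fun i => β (c i)) = fun i => (B *ᵥ β) (c i) := by
  ext i
  have hfib (q : Fin K) : Finset.univ.filter (fun j => c j = q) = C q := by
    ext j; simp [hc]
  simp only [Matrix.mulVec, dotProduct]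
  rw [← Finset.sum_fiberwise Finset.univ c]
  refine Finset.sum_congr rfl fun q _ => ?_
  rw [hfib, ← hB (c i) q i ((hc i _).2 rfl), Finset.sum_mul]
  exact Finset.sum_congr rfl fun j hj => by rw [(hc j q).1 hj]

theorem stmt15 {n K : ℕ} (C : Fin K → Finset (Fin n)) (hC : IsClustering C)
    (A : ℕ → Matrix (Fin n) (Fin n) ℝ)
    (hstoch : ∀ t, IsStochastic (A t))
    (e : ℝ) (he : 0 < e)
    (hB1 : ∀ t i j, A t i j = 0 ∨ e ≤ A t i j)
    (hB2 : ∀ t i, e ≤ A t i i)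
    (B : Matrix (Fin K) (Fin K) ℝ) (hBstoch : IsStochastic B)
    (hB3 : ∀ t p q, ∀ i ∈ C p, ∑ j ∈ C q, A t i j = B p q)
    (L : ℕ) (hL : 0 < L)
    (hspan : ∀ t, HasClusterSpanningTrees C (∑ s ∈ Finset.range L, A (t + s)))
    (u : ℕ → ℝ) (Y : ℝ)
    (hu : ∀ t, |u t| ≤ Y)
    (hsum : ∀ t, |∑ k ∈ Finset.range (t + 1), u k| ≤ Y)
    (α : Fin K → ℝ)
    (I : ℕ → Fin n → ℝ)
    (hI : ∀ t p, ∀ i ∈ C p, I t i = α p * u t)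
    (x : ℕ → Fin n → ℝ)
    (hx : ∀ t, x (t + 1) = (A t).mulVec (x t) + I t) :
    ∃ Mb : ℝ, ∀ t i, |x t i| ≤ Mb := by
  choose c hcmem using hC.2
  have hc (i : Fin n) (p : Fin K) : i ∈ C p ↔ c i = p := by
    refine ⟨fun hi => ?_, fun h => h ▸ hcmem i⟩
    by_contra hne
    exact Finset.disjoint_left.1 (hC.1 _ _ hne) (hcmem i) hi
  let β : ℕ → Fin K → ℝ := fun t => Nat.rec 0 (fun t b => B *ᵥ b + u t • α) t
  let y : ℕ → Fin n → ℝ := fun t i => β t (c i)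
  have hy (s t : ℕ) : y (t + 1) = A s *ᵥ y t + u t • fun i => α (c i) := by
    rw [mulVec_clusterConstant hc (hB3 s)]
    rfl
  have hsum' (t : ℕ) : |∑ k ∈ Finset.range t, u k| ≤ Y := by
    cases t with
    | zero => simpa using (abs_nonneg _).trans (hu 0)
    | succ t => exact hsum t
  obtain ⟨S, hS⟩ := (hstoch 0).exists_sum_norm_le (ε := min e (1 / 2)) (by positivity)
    ((min_le_right _ _).trans_lt (by norm_num)) fun i => (min_le_left _ _).trans (hB2 0 i)
  obtain ⟨R, hR⟩ := exists_norm_response_le hS hsum' (fun i => α (c i)) (y := y) rfl (hy 0)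
  have hz (t : ℕ) : ‖x t - y t‖ ≤ ‖x 0‖ := by
    induction t with
    | zero => exact le_of_eq (congrArg norm (sub_zero (x 0)))
    | succ t ih =>
      have hIt : I t = u t • fun i => α (c i) := by
        ext i
        rw [hI t (c i) i (hcmem i)]
        exact mul_comm _ _
      rw [hx, hy t, hIt, add_sub_add_right_eq_sub, ← Matrix.mulVec_sub]
      exact ((hstoch t).norm_mulVec_le _).trans ih
  refine ⟨‖x 0‖ + R, fun t i => ?_⟩
  calc |x t i| ≤ ‖x t‖ := norm_le_pi_norm (x t) i
    _ = ‖(x t - y t) + y t‖ := by rw [sub_add_cancel]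
    _ ≤ ‖x 0‖ + R := (norm_add_le _ _).trans (add_le_add (hz t) (hR t))
end

section
/- Let C = {C_1,…,C_K} be a clustering of {1,…,n} and let A(t), t ≥ 0, be a sequence of n×n stochastic matrices satisfying: (B1) there exists e > 0 such that for all i, j, t, either A_{ij}(t) = 0 or A_{ij}(t) ≥ e; (B2) A_{ii}(t) ≥ e for all i and t; (B3*, static inter-cluster common influence) there exists a K×K stochastic matrix B = [b_{pq}] such that Σ_{j∈C_q} A_{ij}(t) = b_{pq} for all t ≥ 0, all i ∈ C_p and all p, q. Suppose there exists an integer L > 0 such that for every t ≥ 0 the matrix Σ_{s=t}^{t+L−1} A(s) has cluster-spanning-trees w.r.t. C. Let T ≥ 1, let u : ℕ → ℝ be T-periodic (u(t+T) = u(t)) with Σ_{k=0}^{T−1} u(k) = 0, let α_1,…,α_K ∈ ℝ, and define the input I(t) ∈ ℝ^n by I_i(t) = α_p u(t) for i ∈ C_p. Then for every initial condition x(0) ∈ ℝ^n, the solution of x(t+1) = A(t) x(t) + I(t) converges to a T-periodic, intra-cluster identical trajectory: there exist scalar functions v_1,…,v_K : ℕ → ℝ with v_p(t+T) = v_p(t)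 for all t, such that |x_j(t) − v_p(t)| → 0 as t → ∞ for every j ∈ C_p and every p = 1,…,K. -/
open Finset Filter Topology Matrix

/-- If `f` is asymptotically regular, every vector is the sum of a fixed point of `f` and an
element of the range of `f - 1`. -/
lemma exists_fixed_add_of_asymptotically_regular {E : Type*} [NormedAddCommGroup E]
    [NormedSpace ℝ E] [FiniteDimensional ℝ E] (f : E →ₗ[ℝ] E)
    (hf : ∀ v, Tendsto (fun m : ℕ => (f ^ m) (f v - v)) atTop (𝓝 0)) (v : E) :
    ∃ a b, f a = a ∧ v = a + (f b - b) := by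
  have hdisj : Disjoint (LinearMap.ker (f - 1)) (LinearMap.range (f - 1)) := by
    rw [Submodule.disjoint_def]
    rintro w hw ⟨b, rfl⟩
    simp only [LinearMap.mem_ker, LinearMap.sub_apply, Module.End.one_apply] at hw ⊢
    have hpow : ∀ m : ℕ, (f ^ m) (f b - b) = f b - b := by
      intro m
      induction m with
      | zero => simp
      | succ m ih => rw [pow_succ, Module.End.mul_apply, sub_eq_zero.mp hw, ih]
    have h := hf b
    simp only [hpow] at h
    exact tendsto_nhds_unique tendsto_const_nhds h
  have hcompl : IsCompl (LinearMap.ker (f - 1)) (LinearMap.range (f - 1)) := by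
    rw [Submodule.isCompl_iff_disjoint _ _ _]
    · exact hdisj
    · rw [add_comm, LinearMap.finrank_range_add_finrank_ker]
  have hv : v ∈ LinearMap.ker (f - 1) ⊔ LinearMap.range (f - 1) := by
    rw [hcompl.sup_eq_top]; trivial
  obtain ⟨a, ha, _, ⟨b, rfl⟩, rfl⟩ := Submodule.mem_sup.mp hv
  exact ⟨a, b, sub_eq_zero.mp (by simpa using ha), by simp⟩

lemma pow_tendsto_of_asymptotically_regular {E : Type*} [NormedAddCommGroup E]
    [NormedSpace ℝ E] [FiniteDimensional ℝ E] (f : E →ₗ[ℝ] E)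
    (hf : ∀ v, Tendsto (fun m : ℕ => (f ^ m) (f v - v)) atTop (𝓝 0)) (v : E) :
    ∃ a, f a = a ∧ Tendsto (fun m : ℕ => (f ^ m) v) atTop (𝓝 a) := by
  obtain ⟨a, b, ha, rfl⟩ := exists_fixed_add_of_asymptotically_regular f hf v
  have hpow : ∀ m : ℕ, (f ^ m) a = a := by
    intro m
    induction m with
    | zero => simp
    | succ m ih => rw [pow_succ, Module.End.mul_apply, ha, ih]
  refine ⟨a, ha, ?_⟩
  simpa [hpow] using (tendsto_const_nhds (x := a)).add (hf b)

lemma asymptotically_regular_pow {E : Type*} [NormedAddCommGroup E]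
    [NormedSpace ℝ E] (f : E →ₗ[ℝ] E)
    (hf : ∀ v, Tendsto (fun m : ℕ => (f ^ m) (f v - v)) atTop (𝓝 0))
    {T : ℕ} (hT : 1 ≤ T) (v : E) :
    Tendsto (fun m : ℕ => ((f ^ T) ^ m) ((f ^ T) v - v)) atTop (𝓝 0) := by
  have h : ∀ k : ℕ, Tendsto (fun m : ℕ => (f ^ m) ((f ^ k) v - v)) atTop (𝓝 0) := by
    intro k
    induction k with
    | zero => simp
    | succ k ih =>
      have := (hf ((f ^ k) v)).add ih
      simpa [← map_add, pow_succ'] using this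
  simp only [← pow_mul]
  exact (h T).comp (tendsto_id.const_mul_atTop' (by omega))

/-- A nonexpansive asymptotically regular linear recursion with a periodic forcing term along
`range (f - 1)` has a periodic solution. -/
lemma exists_periodic_solution {E : Type*} [NormedAddCommGroup E]
    [NormedSpace ℝ E] [FiniteDimensional ℝ E] (f : E →ₗ[ℝ] E)
    (hf : ∀ v, Tendsto (fun m : ℕ => (f ^ m) (f v - v)) atTop (𝓝 0))
    {T : ℕ} (hT : 1 ≤ T) (g : ℕ → E) (hg : ∀ t, g (t + T) = g t)
    (hg0 : ∀ t, Tendsto (fun m : ℕ => (f ^ m) (g t)) atTop (𝓝 0)) :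
    ∃ y : ℕ → E, (∀ t, y (t + 1) = f (y t) + g t) ∧ ∀ t, y (t + T) = y t := by
  let sol : E → ℕ → E := fun y₀ t => Nat.rec y₀ (fun t y => f y + g t) t
  have sol_succ : ∀ y₀ t, sol y₀ (t + 1) = f (sol y₀ t) + g t := fun _ _ => rfl
  have sol_eq : ∀ y₀ t, sol y₀ t = (f ^ t) y₀ + sol 0 t := by
    intro y₀ t
    induction t with
    | zero => simp [sol]
    | succ t ih =>
      rw [sol_succ, sol_succ, ih, map_add, pow_succ', Module.End.mul_apply, add_assoc]
  have sol_lim : ∀ t, Tendsto (fun m : ℕ => (f ^ m) (sol 0 t)) atTop (𝓝 0) := by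
    intro t
    induction t with
    | zero => simp [sol]
    | succ t ih =>
      have h := ((tendsto_add_atTop_iff_nat 1).mpr ih).add (hg0 t)
      simpa [sol_succ, pow_succ] using h
  obtain ⟨a, b, ha, hab⟩ := exists_fixed_add_of_asymptotically_regular (f ^ T)
    (asymptotically_regular_pow f hf hT) (sol 0 T)
  have ha0 : a = 0 := by
    have hpow : ∀ m : ℕ, ((f ^ T) ^ m) a = a := by
      intro m
      induction m with
      | zero => simp
      | succ m ih => rw [pow_succ, Module.End.mul_apply, ha, ih]
    have h1 : Tendsto (fun m : ℕ => ((f ^ T) ^ m) (sol 0 T)) atTop (𝓝 0) := by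
      simp only [← pow_mul]
      exact (sol_lim T).comp (tendsto_id.const_mul_atTop' (by omega))
    have h2 := (tendsto_const_nhds (x := a)).add (asymptotically_regular_pow f hf hT b)
    rw [hab] at h1
    simp only [map_add, hpow, add_zero] at h1 h2
    exact tendsto_nhds_unique h2 h1
  refine ⟨sol (-b), sol_succ _, ?_⟩
  intro t
  induction t with
  | zero =>
    rw [zero_add, sol_eq, hab, ha0]
    change (f ^ T) (-b) + (0 + ((f ^ T) b - b)) = -b
    rw [map_neg]
    abel
  | succ t ih => rw [add_right_comm, sol_succ, sol_succ, ih, hg]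

/-- Summable perturbations of a nonexpansive asymptotically regular linear recursion converge. -/
lemma perturbed_recursion_tendsto {E : Type*} [NormedAddCommGroup E]
    [NormedSpace ℝ E] [FiniteDimensional ℝ E] (f : E →ₗ[ℝ] E) (hf1 : ∀ v, ‖f v‖ ≤ ‖v‖)
    (hf : ∀ v, Tendsto (fun m : ℕ => (f ^ m) (f v - v)) atTop (𝓝 0))
    (δ : ℕ → ℝ) (hδ : Summable δ) (y : ℕ → E)
    (hy : ∀ t, ‖y (t + 1) - f (y t)‖ ≤ δ t) :
    ∃ a, Tendsto y atTop (𝓝 a) := by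
  have : CompleteSpace E := FiniteDimensional.complete ℝ E
  have hδ0 : ∀ t, 0 ≤ δ t := fun t => (norm_nonneg _).trans (hy t)
  have hdist : ∀ M k : ℕ, ‖y (M + k) - (f ^ k) (y M)‖ ≤ ∑ j ∈ range k, δ (M + j) := by
    intro M k
    induction k with
    | zero => simp
    | succ k ih =>
      have h1 : y (M + (k + 1)) - (f ^ (k + 1)) (y M) =
          f (y (M + k) - (f ^ k) (y M)) + (y (M + k + 1) - f (y (M + k))) := by
        rw [pow_succ', Module.End.mul_apply, map_sub, ← add_assoc]; abel
      rw [h1, sum_range_succ]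
      exact (norm_add_le _ _).trans (add_le_add ((hf1 _).trans ih) (hy _))
  refine cauchySeq_tendsto_of_complete (Metric.cauchySeq_iff'.mpr fun ε hε => ?_)
  obtain ⟨M, hM⟩ := ((tendsto_sum_nat_add δ).eventually (gt_mem_nhds
    (show 0 < ε / 4 by positivity))).exists
  have htail : ∀ k, ‖y (M + k) - (f ^ k) (y M)‖ < ε / 4 := by
    intro k
    refine (hdist M k).trans_lt (lt_of_le_of_lt ?_ hM)
    simp only [add_comm M]
    exact ((summable_nat_add_iff M).mpr hδ).sum_le_tsum _ fun _ _ => hδ0 _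
  obtain ⟨a, -, ha⟩ := pow_tendsto_of_asymptotically_regular f hf (y M)
  obtain ⟨N, hN⟩ := Metric.tendsto_atTop.mp ha (ε / 4) (by positivity)
  refine ⟨M + N, fun k hk => ?_⟩
  obtain ⟨j, rfl⟩ := Nat.exists_eq_add_of_le hk
  have h1 := hN (N + j) (by omega)
  have h2 := hN N le_rfl
  have h3 := htail (N + j)
  have h4 := htail N
  rw [← dist_eq_norm] at h3 h4
  rw [add_assoc]
  calc dist (y (M + (N + j))) (y (M + N))
      ≤ dist (y (M + (N + j))) ((f ^ (N + j)) (y M)) + dist ((f ^ (N + j)) (y M)) (y (M + N)) :=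
        dist_triangle _ _ _
    _ ≤ dist (y (M + (N + j))) ((f ^ (N + j)) (y M)) + (dist ((f ^ (N + j)) (y M)) a +
          (dist ((f ^ N) (y M)) a + dist (y (M + N)) ((f ^ N) (y M)))) := by
        gcongr
        refine (dist_triangle _ a _).trans ?_
        gcongr
        rw [dist_comm (y (M + N)), dist_comm _ a]
        exact dist_triangle _ _ _
    _ < ε := by linarith

/-- One-sided form of asymptotic regularity for stochastic matrices with positive diagonal. -/
lemma increments_eventually_le {n : ℕ} (A : Matrix (Fin n) (Fin n) ℝ) (hA : IsStochastic A)
    {e : ℝ} (he : 0 < e) (hdiag : ∀ i, e ≤ A i i) (z : ℕ → Fin n → ℝ)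
    (hz : ∀ m, z (m + 1) = A *ᵥ z m) {ε : ℝ} (hε : 0 < ε) :
    ∀ᶠ m in atTop, ∀ i, z (m + 1) i - z m i ≤ ε := by
  rcases isEmpty_or_nonempty (Fin n) with hn | hn
  · exact Eventually.of_forall fun _ i => hn.elim i
  have hA_le : ∀ i, A i i ≤ 1 := fun i =>
    (hA.2 i) ▸ single_le_sum (fun j _ => hA.1 i j) (mem_univ i)
  have he1 : e ≤ 1 := (hdiag hn.some).trans (hA_le _)
  have hbd : ∀ m i, |z m i| ≤ ‖z 0‖ := by
    intro m
    induction m with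
    | zero => exact fun i => norm_le_pi_norm (z 0) i
    | succ m ih =>
      intro i
      rw [hz]
      calc |∑ j, A i j * z m j| ≤ ∑ j, |A i j * z m j| := abs_sum_le_sum_abs _ _
        _ ≤ ∑ j, A i j * ‖z 0‖ := sum_le_sum fun j _ => by
            rw [abs_mul, abs_of_nonneg (hA.1 i j)]
            exact mul_le_mul_of_nonneg_left (ih j) (hA.1 i j)
        _ = ‖z 0‖ := by rw [← sum_mul, hA.2, one_mul]
  set d : ℕ → Fin n → ℝ := fun m i => z (m + 1) i - z m i with hd
  have hd_succ : ∀ m i, d (m + 1) i = ∑ j, A i j * d m j := by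
    intro m i
    simp only [hd, mul_sub, sum_sub_distrib]
    rw [hz (m + 1), hz m]
    simp [Matrix.mulVec, dotProduct]
  have hcontr : ∀ S m i, (∀ j, d m j ≤ S) → e * (S - d m i) ≤ S - d (m + 1) i := by
    intro S m i hS
    calc e * (S - d m i) ≤ A i i * (S - d m i) :=
          mul_le_mul_of_nonneg_right (hdiag i) (sub_nonneg.mpr (hS i))
      _ ≤ ∑ j, A i j * (S - d m j) :=
          single_le_sum (f := fun j => A i j * (S - d m j))
            (fun j _ => mul_nonneg (hA.1 i j) (sub_nonneg.mpr (hS j))) (mem_univ i)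
      _ = S - d (m + 1) i := by
          simp only [mul_sub, sum_sub_distrib, ← sum_mul, hA.2, one_mul, hd_succ]
  let s : ℕ → ℝ := fun m => ⨆ i, d m i
  have hds : ∀ m i, d m i ≤ s m := fun m i => le_ciSup (Set.finite_range (d m)).bddAbove i
  have hs_anti : Antitone s := antitone_nat_of_succ_le fun m => ciSup_le fun i => by
    have h1 := hcontr (s m) m i (hds m)
    have h2 := mul_nonneg he.le (sub_nonneg.mpr (hds m i))
    linarith
  have hs_bdd : BddBelow (Set.range s) := by
    refine ⟨-(2 * ‖z 0‖), ?_⟩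
    rintro _ ⟨m, rfl⟩
    refine le_trans ?_ (hds m hn.some)
    have h1 := abs_le.mp (hbd (m + 1) hn.some)
    have h2 := abs_le.mp (hbd m hn.some)
    simp only [hd]
    linarith
  by_contra hcon
  have hs_gt : ∀ m, ε < s m := by
    intro m
    obtain ⟨k, hk, hk'⟩ := frequently_atTop.mp (not_eventually.mp hcon) m
    push Not at hk'
    obtain ⟨i, hi⟩ := hk'
    exact hi.trans_le ((hds k i).trans (hs_anti hk))
  obtain ⟨k, hk⟩ := exists_nat_gt (2 * ‖z 0‖ / (ε / 2))
  have hlim := tendsto_atTop_ciInf hs_anti hs_bdd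
  have hdiff := hlim.sub ((tendsto_add_atTop_iff_nat k).mpr hlim)
  rw [sub_self] at hdiff
  obtain ⟨M, hM⟩ := (hdiff.eventually (gt_mem_nhds
    (show 0 < e ^ k * (ε / 2) by positivity))).exists
  obtain ⟨i, hi⟩ := exists_eq_ciSup_of_finite (f := d (M + k))
  have hpow : ∀ a j, M ≤ a → e ^ j * (s M - d a i) ≤ s M - d (a + j) i := by
    intro a j ha
    induction j with
    | zero => simp
    | succ j ih =>
      calc e ^ (j + 1) * (s M - d a i) = e * (e ^ j * (s M - d a i)) := by ring
        _ ≤ e * (s M - d (a + j) i) := mul_le_mul_of_nonneg_left ih he.le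
        _ ≤ s M - d (a + (j + 1)) i :=
            hcontr _ _ _ fun l => (hds _ l).trans (hs_anti (by omega))
  have hlow : ∀ j ∈ range k, ε / 2 ≤ d (M + j) i := by
    intro j hj
    have hj' := mem_range.mp hj
    have h1 := hpow (M + j) (k - j) (by omega)
    rw [show M + j + (k - j) = M + k by omega, hi] at h1
    have h2 : e ^ k * (s M - d (M + j) i) ≤ e ^ (k - j) * (s M - d (M + j) i) :=
      mul_le_mul_of_nonneg_right (pow_le_pow_of_le_one he.le he1 (by omega))
        (sub_nonneg.mpr ((hds _ i).trans (hs_anti (by omega))))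
    have h3 : e ^ k * (s M - d (M + j) i) < e ^ k * (ε / 2) := (h2.trans h1).trans_lt hM
    have h4 := lt_of_mul_lt_mul_left h3 (by positivity)
    linarith [hs_gt M]
  have hsum : ∑ j ∈ range k, d (M + j) i = z (M + k) i - z M i :=
    sum_range_sub (fun j => z (M + j) i) k
  have h1 : k * (ε / 2) ≤ ∑ j ∈ range k, d (M + j) i := by
    simpa using card_nsmul_le_sum _ _ _ hlow
  rw [div_lt_iff₀ (by positivity)] at hk
  have h2 := abs_le.mp (hbd (M + k) i)
  have h3 := abs_le.mp (hbd M i)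
  linarith

lemma stochastic_norm_mulVec_le {n : ℕ} (A : Matrix (Fin n) (Fin n) ℝ) (hA : IsStochastic A)
    (v : Fin n → ℝ) : ‖A *ᵥ v‖ ≤ ‖v‖ := by
  refine (pi_norm_le_iff_of_nonneg (norm_nonneg _)).mpr fun i => ?_
  calc |∑ j, A i j * v j| ≤ ∑ j, |A i j * v j| := abs_sum_le_sum_abs _ _
    _ ≤ ∑ j, A i j * ‖v‖ := sum_le_sum fun j _ => by
        rw [abs_mul, abs_of_nonneg (hA.1 i j)]
        exact mul_le_mul_of_nonneg_left (norm_le_pi_norm v j) (hA.1 i j)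
    _ = ‖v‖ := by rw [← sum_mul, hA.2, one_mul]

lemma stochastic_asymptotically_regular {n : ℕ} (A : Matrix (Fin n) (Fin n) ℝ)
    (hA : IsStochastic A) {e : ℝ} (he : 0 < e) (hdiag : ∀ i, e ≤ A i i) (v : Fin n → ℝ) :
    Tendsto (fun m : ℕ => (A.mulVecLin ^ m) (A.mulVecLin v - v)) atTop (𝓝 0) := by
  have key : ∀ (w : Fin n → ℝ) {ε : ℝ}, 0 < ε →
      ∀ᶠ m : ℕ in atTop, ∀ i, (A.mulVecLin ^ m) (A.mulVecLin w - w) i ≤ ε := by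
    intro w ε hε
    have h := increments_eventually_le A hA he hdiag (fun m => (A.mulVecLin ^ m) w)
      (fun m => by rw [pow_succ', Module.End.mul_apply, Matrix.mulVecLin_apply]) hε
    filter_upwards [h] with m hm i
    simpa [pow_succ] using hm i
  rw [Metric.tendsto_nhds]
  intro ε hε
  filter_upwards [key v (half_pos hε), key (-v) (half_pos hε)] with m h1 h2
  rw [dist_zero_right]
  refine lt_of_le_of_lt ((pi_norm_le_iff_of_nonneg (half_pos hε).le).mpr fun i => ?_)
    (half_lt_self hε)
  refine abs_le.mpr ⟨?_, h1 i⟩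
  have h3 := h2 i
  rw [map_neg, ← neg_sub', map_neg, Pi.neg_apply] at h3
  linarith

lemma prodFrom_add {n : ℕ} (A : ℕ → Matrix (Fin n) (Fin n) ℝ) (a m k : ℕ) :
    prodFrom A a (m + k) = prodFrom A (a + m) k * prodFrom A a m := by
  induction k with
  | zero => simp [prodFrom]
  | succ k ih => rw [← add_assoc, prodFrom, prodFrom, ih, Matrix.mul_assoc, add_assoc]

lemma IsStochastic.mul {n : ℕ} {A P : Matrix (Fin n) (Fin n) ℝ} (hA : IsStochastic A)
    (hP : IsStochastic P) : IsStochastic (A * P) := by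
  refine ⟨fun i j => ?_, fun i => ?_⟩
  · rw [Matrix.mul_apply]
    exact sum_nonneg fun k _ => mul_nonneg (hA.1 i k) (hP.1 k j)
  simp only [Matrix.mul_apply]
  rw [sum_comm]
  simp only [← mul_sum, hP.2, mul_one, hA.2]

lemma isStochastic_prodFrom {n : ℕ} {A : ℕ → Matrix (Fin n) (Fin n) ℝ}
    (hA : ∀ t, IsStochastic (A t)) (a m : ℕ) : IsStochastic (prodFrom A a m) := by
  induction m with
  | zero => exact ⟨fun i j => by simp only [prodFrom, Matrix.one_apply]; split <;> simp,
      fun i => by simp [prodFrom, Matrix.one_apply]⟩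
  | succ m ih => exact (hA _).mul ih

lemma mul_apply_pos {n : ℕ} {A P : Matrix (Fin n) (Fin n) ℝ} (hA : ∀ i j, 0 ≤ A i j)
    (hP : ∀ i j, 0 ≤ P i j) {i j k : Fin n} (hik : 0 < A i k) (hkj : 0 < P k j) :
    0 < (A * P) i j :=
  (mul_pos hik hkj).trans_le (single_le_sum (f := fun k => A i k * P k j)
    (fun l _ => mul_nonneg (hA i l) (hP l j)) (mem_univ k))

lemma prodFrom_diag_pos {n : ℕ} {A : ℕ → Matrix (Fin n) (Fin n) ℝ}
    (hA : ∀ t, IsStochastic (A t)) (hdiag : ∀ t i, 0 < A t i i) (a m : ℕ) (i : Fin n) :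
    0 < prodFrom A a m i i := by
  induction m with
  | zero => simp [prodFrom]
  | succ m ih => exact mul_apply_pos (hA _).1 (isStochastic_prodFrom hA a m).1 (hdiag _ i) ih

lemma prodFrom_pos_of_sum_pos {n : ℕ} {A : ℕ → Matrix (Fin n) (Fin n) ℝ}
    (hA : ∀ t, IsStochastic (A t)) (hdiag : ∀ t i, 0 < A t i i) (a m : ℕ) {i j : Fin n}
    (h : 0 < (∑ s ∈ range m, A (a + s)) i j) : 0 < prodFrom A a m i j := by
  induction m with
  | zero => simp at h
  | succ m ih =>
    have hnn := (isStochastic_prodFrom hA a m).1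
    rw [sum_range_succ, Matrix.add_apply] at h
    rcases ((hA (a + m)).1 i j).eq_or_lt with h0 | h0
    · rw [← h0, add_zero] at h
      exact mul_apply_pos (hA _).1 hnn (hdiag _ i) (ih h)
    · exact mul_apply_pos (hA _).1 hnn h0 (prodFrom_diag_pos hA hdiag a m j)

lemma pow_le_prodFrom_of_pos {n : ℕ} {A : ℕ → Matrix (Fin n) (Fin n) ℝ}
    (hA : ∀ t, IsStochastic (A t)) {e : ℝ} (he : 0 < e)
    (hB1 : ∀ t i j, A t i j = 0 ∨ e ≤ A t i j) (a m : ℕ) {i j : Fin n}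
    (h : 0 < prodFrom A a m i j) : e ^ m ≤ prodFrom A a m i j := by
  induction m generalizing i with
  | zero =>
    simp only [prodFrom, Matrix.one_apply] at h ⊢
    split_ifs at h ⊢ <;> simp_all
  | succ m ih =>
    have hnn := (isStochastic_prodFrom hA a m).1
    have h' : 0 < ∑ k, A (a + m) i k * prodFrom A a m k j := h
    obtain ⟨k, -, hk⟩ := (sum_pos_iff_of_nonneg
      fun k _ => mul_nonneg ((hA (a + m)).1 i k) (hnn k j)).mp h'
    have hk1 : 0 < A (a + m) i k := pos_of_mul_pos_left hk (hnn k j)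
    have hk2 : 0 < prodFrom A a m k j := pos_of_mul_pos_right hk hk1.le
    have hek : e ≤ A (a + m) i k := (hB1 (a + m) i k).resolve_left hk1.ne'
    calc e ^ (m + 1) = e * e ^ m := pow_succ' e m
      _ ≤ A (a + m) i k * prodFrom A a m k j :=
          mul_le_mul hek (ih hk2) (pow_nonneg he.le m) hk1.le
      _ ≤ ∑ k, A (a + m) i k * prodFrom A a m k j :=
          single_le_sum (f := fun k => A (a + m) i k * prodFrom A a m k j)
            (fun l _ => mul_nonneg ((hA (a + m)).1 i l) (hnn l j)) (mem_univ k)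

/-- Columns in which row `i` of `Q` is positive. -/
noncomputable def posSupport {n : ℕ} (Q : Matrix (Fin n) (Fin n) ℝ) (i : Fin n) :
    Finset (Fin n) :=
  {k | 0 < Q i k}

lemma mem_posSupport {n : ℕ} {Q : Matrix (Fin n) (Fin n) ℝ} {i k : Fin n} :
    k ∈ posSupport Q i ↔ 0 < Q i k := by
  simp [posSupport]

lemma posSupport_subset_mul {n : ℕ} {Q W : Matrix (Fin n) (Fin n) ℝ} (hQ : ∀ i j, 0 ≤ Q i j)
    (hW : ∀ i j, 0 ≤ W i j) (hdiag : ∀ i, 0 < W i i) (i : Fin n) :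
    posSupport Q i ⊆ posSupport (Q * W) i := fun k hk =>
  mem_posSupport.mpr (mul_apply_pos hQ hW (mem_posSupport.mp hk) (hdiag k))

lemma card_posSupport_lt_mul {n : ℕ} {Q W : Matrix (Fin n) (Fin n) ℝ} (hQ : ∀ i j, 0 ≤ Q i j)
    (hW : ∀ i j, 0 ≤ W i j) (hdiag : ∀ i, 0 < W i i) {i v : Fin n} (hi : 0 < Q i i)
    (hv : Reaches W v i) (hiv : ¬ 0 < Q i v) :
    #(posSupport Q i) < #(posSupport (Q * W) i) := by
  have hedge : 0 < Q i v ∨ ∃ k l, 0 < Q i k ∧ ¬ 0 < Q i l ∧ 0 < W k l := by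
    clear hiv
    induction hv using Relation.ReflTransGen.head_induction_on with
    | refl => exact Or.inl hi
    | head hab _ ih =>
      rcases ih with h | h
      · exact or_iff_not_imp_left.mpr fun hnot => ⟨_, _, h, hnot, hab⟩
      · exact Or.inr h
  obtain ⟨k, l, hk, hl, hkl⟩ := hedge.resolve_left hiv
  exact card_lt_card ((ssubset_iff_of_subset (posSupport_subset_mul hQ hW hdiag i)).mpr
    ⟨l, mem_posSupport.mpr (mul_apply_pos hQ hW hk hkl), fun h => hl (mem_posSupport.mp h)⟩)

/-- Under uniformly recurring cluster-spanning-trees, rows of long products belonging to one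
cluster have overlapping supports. -/
lemma exists_common_pos {n K : ℕ} {C : Fin K → Finset (Fin n)}
    {A : ℕ → Matrix (Fin n) (Fin n) ℝ} (hA : ∀ t, IsStochastic (A t))
    (hdiag : ∀ t i, 0 < A t i i) {L : ℕ}
    (hspan : ∀ t, HasClusterSpanningTrees C (∑ s ∈ range L, A (t + s)))
    {p : Fin K} {i j : Fin n} (hi : i ∈ C p) (hj : j ∈ C p) (a : ℕ) :
    ∃ k, 0 < prodFrom A a ((2 * n + 1) * L) i k ∧ 0 < prodFrom A a ((2 * n + 1) * L) j k := by
  have key : ∀ w a, (∃ k, 0 < prodFrom A a (w * L) i k ∧ 0 < prodFrom A a (w * L) j k) ∨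
      w ≤ #(posSupport (prodFrom A a (w * L)) i) + #(posSupport (prodFrom A a (w * L)) j) := by
    intro w
    induction w with
    | zero => exact fun a => Or.inr (Nat.zero_le _)
    | succ w ih =>
      intro a
      rw [add_one_mul, add_comm, prodFrom_add]
      have hQ := isStochastic_prodFrom hA (a + L) (w * L)
      have hW := isStochastic_prodFrom hA a L
      have hQd := prodFrom_diag_pos hA hdiag (a + L) (w * L)
      have hWd := prodFrom_diag_pos hA hdiag a L
      have hsum := ih (a + L)
      generalize prodFrom A (a + L) (w * L) = Q at *
      obtain ⟨v, hv⟩ := hspan a p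
      have hreach : ∀ l ∈ C p, Reaches (prodFrom A a L) v l := fun l hl =>
        Relation.ReflTransGen.mono (fun _ _ h => prodFrom_pos_of_sum_pos hA hdiag a L h) _ _
          (hv l hl)
      generalize prodFrom A a L = W at *
      have hsub_i := card_le_card (posSupport_subset_mul hQ.1 hW.1 hWd i)
      have hsub_j := card_le_card (posSupport_subset_mul hQ.1 hW.1 hWd j)
      rcases hsum with ⟨k, hik, hjk⟩ | hsum
      · exact Or.inl ⟨k, mul_apply_pos hQ.1 hW.1 hik (hWd k),
          mul_apply_pos hQ.1 hW.1 hjk (hWd k)⟩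
      by_cases hiv : 0 < Q i v
      · by_cases hjv : 0 < Q j v
        · exact Or.inl ⟨v, mul_apply_pos hQ.1 hW.1 hiv (hWd v),
            mul_apply_pos hQ.1 hW.1 hjv (hWd v)⟩
        · have := card_posSupport_lt_mul hQ.1 hW.1 hWd (hQd j) (hreach j hj) hjv
          right; omega
      · have := card_posSupport_lt_mul hQ.1 hW.1 hWd (hQd i) (hreach i hi) hiv
        right; omega
  refine (key (2 * n + 1) a).resolve_right fun h => ?_
  have h1 := card_le_univ (posSupport (prodFrom A a ((2 * n + 1) * L)) i)
  have h2 := card_le_univ (posSupport (prodFrom A a ((2 * n + 1) * L)) j)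
  rw [Fintype.card_fin] at h1 h2
  omega

lemma exists_cluster_floor {n K : ℕ} (c : Fin n → Fin K) (w : Fin n → ℝ) {D : ℝ}
    (hw : ∀ i j, c i = c j → w i - w j ≤ D) :
    ∃ f : Fin K → ℝ, ∀ i, f (c i) ≤ w i ∧ w i ≤ f (c i) + D := by
  have h : ∀ q, ∃ y : ℝ, ∀ i, c i = q → y ≤ w i ∧ w i ≤ y + D := by
    intro q
    rcases (univ.filter fun i => c i = q).eq_empty_or_nonempty with hq | hq
    · exact ⟨0, fun i hi => absurd hi (filter_eq_empty_iff.mp hq (mem_univ i))⟩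
    · obtain ⟨j, hj, hmin⟩ := exists_min_image _ w hq
      have hjq : c j = q := (mem_filter.mp hj).2
      refine ⟨w j, fun i hi => ⟨hmin i (by simpa using hi), ?_⟩⟩
      have := hw i j (hi.trans hjq.symm)
      linarith
  choose f hf using h
  exact ⟨f, fun i => hf _ i rfl⟩

/-- If rows `i` and `j` of a stochastic matrix give the same weight to every cluster and overlap
by at least `ε`, the intra-cluster spread contracts by the factor `1 - ε`. -/
lemma mulVec_sub_le_of_overlap {n K : ℕ} {c : Fin n → Fin K} {P : Matrix (Fin n) (Fin n) ℝ}
    (hP : IsStochastic P) {i j : Fin n}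
    (hij : ∀ f : Fin K → ℝ, (P *ᵥ (f ∘ c)) i = (P *ᵥ (f ∘ c)) j)
    {ε : ℝ} (hε : ε ≤ ∑ k, min (P i k) (P j k)) {w : Fin n → ℝ} {D : ℝ} (hD : 0 ≤ D)
    (hw : ∀ i j, c i = c j → w i - w j ≤ D) :
    (P *ᵥ w) i - (P *ᵥ w) j ≤ (1 - ε) * D := by
  obtain ⟨f, hf⟩ := exists_cluster_floor c w hw
  have h0 : ∑ k, P i k * f (c k) = ∑ k, P j k * f (c k) := hij f
  calc (P *ᵥ w) i - (P *ᵥ w) j = ∑ k, (P i k - P j k) * (w k - f (c k)) := by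
        simp only [sub_mul, mul_sub, sum_sub_distrib, h0, Matrix.mulVec, dotProduct]
        ring
    _ ≤ ∑ k, (P i k - min (P i k) (P j k)) * D := by
        refine sum_le_sum fun k _ => ?_
        have h1 := hf k
        calc (P i k - P j k) * (w k - f (c k))
            ≤ (P i k - min (P i k) (P j k)) * (w k - f (c k)) :=
              mul_le_mul_of_nonneg_right (by linarith [min_le_right (P i k) (P j k)])
                (by linarith)
          _ ≤ _ := mul_le_mul_of_nonneg_left (by linarith)
              (by linarith [min_le_left (P i k) (P j k)])
    _ = (1 - ∑ k, min (P i k) (P j k)) * D := by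
        rw [← sum_mul, sum_sub_distrib, hP.2]
    _ ≤ (1 - ε) * D := mul_le_mul_of_nonneg_right (by linarith) hD

lemma prodFrom_mulVec_comp {n K : ℕ} {c : Fin n → Fin K} {A : ℕ → Matrix (Fin n) (Fin n) ℝ}
    {B : Matrix (Fin K) (Fin K) ℝ} (hAB : ∀ t f, A t *ᵥ (f ∘ c) = (B *ᵥ f) ∘ c) (a m : ℕ)
    (f : Fin K → ℝ) : ∃ g : Fin K → ℝ, prodFrom A a m *ᵥ (f ∘ c) = g ∘ c := by
  induction m with
  | zero => exact ⟨f, by simp [prodFrom]⟩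
  | succ m ih =>
    obtain ⟨g, hg⟩ := ih
    exact ⟨B *ᵥ g, by rw [prodFrom, ← Matrix.mulVec_mulVec, hg, hAB]⟩

lemma solution_eq_prodFrom_add {n K : ℕ} {c : Fin n → Fin K}
    {A : ℕ → Matrix (Fin n) (Fin n) ℝ} {B : Matrix (Fin K) (Fin K) ℝ}
    (hAB : ∀ t f, A t *ᵥ (f ∘ c) = (B *ᵥ f) ∘ c) {h : ℕ → Fin K → ℝ} {x : ℕ → Fin n → ℝ}
    (hx : ∀ t, x (t + 1) = A t *ᵥ x t + h t ∘ c) (a m : ℕ) :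
    ∃ g : Fin K → ℝ, x (a + m) = prodFrom A a m *ᵥ x a + g ∘ c := by
  induction m with
  | zero => exact ⟨0, by ext i; simp [prodFrom]⟩
  | succ m ih =>
    obtain ⟨g, hg⟩ := ih
    refine ⟨B *ᵥ g + h (a + m), ?_⟩
    rw [← add_assoc, hx, hg, Matrix.mulVec_add, hAB, prodFrom, Matrix.mulVec_mulVec, add_assoc]
    rfl

/-- The intra-cluster spread of a solution is bounded by a summable sequence. -/
lemma exists_summable_spread {n K : ℕ} {C : Fin K → Finset (Fin n)} {c : Fin n → Fin K}
    (hc : ∀ i, i ∈ C (c i)) {A : ℕ → Matrix (Fin n) (Fin n) ℝ} (hA : ∀ t, IsStochastic (A t))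
    {e : ℝ} (he : 0 < e) (hB1 : ∀ t i j, A t i j = 0 ∨ e ≤ A t i j)
    (hB2 : ∀ t i, e ≤ A t i i) {L : ℕ} (hL : 0 < L)
    (hspan : ∀ t, HasClusterSpanningTrees C (∑ s ∈ range L, A (t + s)))
    {B : Matrix (Fin K) (Fin K) ℝ} (hAB : ∀ t f, A t *ᵥ (f ∘ c) = (B *ᵥ f) ∘ c)
    {h : ℕ → Fin K → ℝ} {x : ℕ → Fin n → ℝ} (hx : ∀ t, x (t + 1) = A t *ᵥ x t + h t ∘ c) :
    ∃ D : ℕ → ℝ, Summable D ∧ (∀ t, 0 ≤ D t) ∧ ∀ t i j, c i = c j → x t i - x t j ≤ D t := by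
  rcases isEmpty_or_nonempty (Fin n) with hn | hn
  · exact ⟨0, summable_zero, fun _ => le_rfl, fun _ i => hn.elim i⟩
  have hdiag : ∀ t i, 0 < A t i i := fun t i => he.trans_le (hB2 t i)
  have he1 : e ≤ 1 := (hB2 0 hn.some).trans
    (((hA 0).2 hn.some) ▸ single_le_sum (fun j _ => (hA 0).1 _ j) (mem_univ _))
  set M := (2 * n + 1) * L with hM
  have hMpos : 0 < M := by positivity
  have : NeZero M := ⟨hMpos.ne'⟩
  set q := 1 - e ^ M with hq
  have hq0 : 0 ≤ q := sub_nonneg.mpr (pow_le_one₀ he.le he1)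
  have hq1 : q < 1 := sub_lt_self _ (by positivity)
  have hstep : ∀ t m {ε D : ℝ}, 0 ≤ D →
      (∀ i j, c i = c j → ε ≤ ∑ k, min (prodFrom A t m i k) (prodFrom A t m j k)) →
      (∀ i j, c i = c j → x t i - x t j ≤ D) →
      ∀ i j, c i = c j → x (t + m) i - x (t + m) j ≤ (1 - ε) * D := by
    intro t m ε D hD hε hw i j hij
    obtain ⟨g, hg⟩ := solution_eq_prodFrom_add hAB hx t m
    have h1 := mulVec_sub_le_of_overlap (c := c) (isStochastic_prodFrom hA t m) (i := i) (j := j)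
      (fun f => by
        obtain ⟨g, hg⟩ := prodFrom_mulVec_comp hAB t m f
        simp [hg, hij]) (hε i j hij) hD hw
    simpa [hg, hij] using h1
  set D₀ := 2 * ‖x 0‖ with hD₀
  have hspread : ∀ k r i j, c i = c j → x (r + k * M) i - x (r + k * M) j ≤ q ^ k * D₀ := by
    intro k r
    induction k with
    | zero =>
      have h0 : ∀ i j, c i = c j → x 0 i - x 0 j ≤ D₀ := by
        intro i j _
        have h1 := abs_le.mp (norm_le_pi_norm (x 0) i)
        have h2 := abs_le.mp (norm_le_pi_norm (x 0) j)
        linarith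
      simpa using hstep 0 r (ε := 0) (by positivity) (fun i j _ => sum_nonneg fun k _ =>
        le_min ((isStochastic_prodFrom hA 0 r).1 i k) ((isStochastic_prodFrom hA 0 r).1 j k)) h0
    | succ k ih =>
      have h1 := hstep (r + k * M) M (ε := e ^ M) (by positivity) ?_ ih
      · rw [add_one_mul, ← add_assoc, pow_succ', mul_assoc]
        exact h1
      · intro i j hij
        obtain ⟨l, hil, hjl⟩ := exists_common_pos hA hdiag hspan (hc i) (hij ▸ hc j) (r + k * M)
        have hnn := (isStochastic_prodFrom hA (r + k * M) M).1
        exact (le_min (pow_le_prodFrom_of_pos hA he hB1 _ _ hil)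
          (pow_le_prodFrom_of_pos hA he hB1 _ _ hjl)).trans
          (single_le_sum (f := fun l => min (prodFrom A (r + k * M) M i l)
            (prodFrom A (r + k * M) M j l)) (fun l _ => le_min (hnn i l) (hnn j l)) (mem_univ l))
  refine ⟨fun t => q ^ (t / M) * D₀, ?_, fun t => by positivity, fun t i j hij => ?_⟩
  · refine Summable.mul_right _ ?_
    have h1 : Summable fun a : ℕ × Fin M => q ^ a.1 * (1 : ℝ) :=
      (summable_geometric_of_lt_one hq0 hq1).mul_of_nonneg (g := fun _ : Fin M => (1 : ℝ))
        (Summable.of_finite) (fun _ => pow_nonneg hq0 _) (fun _ => zero_le_one)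
    have h2 := (Nat.divModEquiv M).summable_iff.mpr h1
    simpa [Function.comp_def] using h2
  · have h1 := hspread (t / M) (t % M) i j hij
    rwa [Nat.mod_add_div'] at h1

lemma sum_range_add_period {u : ℕ → ℝ} {T : ℕ} (hu : ∀ t, u (t + T) = u t)
    (husum : ∑ k ∈ range T, u k = 0) (t : ℕ) :
    ∑ k ∈ range (t + T), u k = ∑ k ∈ range t, u k := by
  induction t with
  | zero => simpa using husum
  | succ t ih => rw [add_right_comm, sum_range_succ, sum_range_succ, ih, hu]

theorem stmt16 {n K : ℕ} (C : Fin K → Finset (Fin n)) (hC : IsClustering C)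
    (A : ℕ → Matrix (Fin n) (Fin n) ℝ)
    (hstoch : ∀ t, IsStochastic (A t))
    (e : ℝ) (he : 0 < e)
    (hB1 : ∀ t i j, A t i j = 0 ∨ e ≤ A t i j)
    (hB2 : ∀ t i, e ≤ A t i i)
    (B : Matrix (Fin K) (Fin K) ℝ) (hBstoch : IsStochastic B)
    (hB3 : ∀ t p q, ∀ i ∈ C p, ∑ j ∈ C q, A t i j = B p q)
    (L : ℕ) (hL : 0 < L)
    (hspan : ∀ t, HasClusterSpanningTrees C (∑ s ∈ Finset.range L, A (t + s)))
    (T : ℕ) (hT : 1 ≤ T)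
    (u : ℕ → ℝ) (hu : ∀ t, u (t + T) = u t)
    (husum : ∑ k ∈ Finset.range T, u k = 0)
    (α : Fin K → ℝ)
    (I : ℕ → Fin n → ℝ)
    (hI : ∀ t p, ∀ i ∈ C p, I t i = α p * u t)
    (x : ℕ → Fin n → ℝ)
    (hx : ∀ t, x (t + 1) = (A t).mulVec (x t) + I t) :
    ∃ v : Fin K → ℕ → ℝ, (∀ p t, v p (t + T) = v p t) ∧
      ∀ p, ∀ j ∈ C p, Tendsto (fun t => |x t j - v p t|) atTop (𝓝 0) := by
  choose c hc using hC.2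
  have hmem : ∀ i p, i ∈ C p ↔ c i = p := by
    refine fun i p => ⟨fun hi => ?_, fun h => h ▸ hc i⟩
    by_contra hne
    exact disjoint_left.mp (hC.1 _ _ hne) (hc i) hi
  have hAB : ∀ t (f : Fin K → ℝ), A t *ᵥ (f ∘ c) = (B *ᵥ f) ∘ c := by
    intro t f
    ext i
    have hfilter : ∀ q, univ.filter (fun j => c j = q) = C q := fun q => by
      ext j; simp [hmem]
    change ∑ j, A t i j * f (c j) = ∑ q, B (c i) q * f q
    rw [← sum_fiberwise univ c]
    refine sum_congr rfl fun q _ => ?_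
    rw [hfilter, ← hB3 t (c i) q i (hc i), sum_mul]
    exact sum_congr rfl fun j hj => by rw [(hmem j q).mp hj]
  have hx' : ∀ t, x (t + 1) = A t *ᵥ x t + (fun p => α p * u t) ∘ c := fun t => by
    rw [hx]
    congr 1
    ext i
    exact hI t (c i) i (hc i)
  obtain ⟨D, hD, hD0, hxD⟩ := exists_summable_spread hc hstoch he hB1 hB2 hL hspan hAB hx'
  set b : Fin n → ℝ := α ∘ c with hb
  set S : ℕ → ℝ := fun t => ∑ k ∈ Finset.range t, u k with hS
  have hST : ∀ t, S (t + T) = S t := sum_range_add_period hu husum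
  set F := (A 0).mulVecLin with hF
  have hreg := stochastic_asymptotically_regular (A 0) (hstoch 0) he (hB2 0)
  obtain ⟨y, hy, hyT⟩ := exists_periodic_solution F hreg hT
    (fun t => S t • (F b - b)) (fun t => by simp only [hST])
    (fun t => by simpa only [map_smul, smul_zero] using (hreg b).const_smul (S t))
  have hdrift : ∀ t, ‖A t *ᵥ x t - F (x t)‖ ≤ D t := by
    intro t
    refine (pi_norm_le_iff_of_nonneg (hD0 t)).mpr fun i => ?_
    obtain ⟨f, hf⟩ := exists_cluster_floor c (x t) (hxD t)
    have hrow : ∀ s, (B *ᵥ f) (c i) ≤ (A s *ᵥ x t) i ∧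
        (A s *ᵥ x t) i ≤ (B *ᵥ f) (c i) + D t := by
      intro s
      have h1 : ∑ j, A s i j * f (c j) = (B *ᵥ f) (c i) := congrFun (hAB s f) i
      rw [← h1]
      constructor
      · exact sum_le_sum fun j _ => mul_le_mul_of_nonneg_left (hf j).1 ((hstoch s).1 i j)
      · calc ∑ j, A s i j * x t j ≤ ∑ j, A s i j * (f (c j) + D t) :=
              sum_le_sum fun j _ => mul_le_mul_of_nonneg_left (hf j).2 ((hstoch s).1 i j)
          _ = _ := by simp only [mul_add, sum_add_distrib, ← sum_mul, (hstoch s).2, one_mul]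
    have h1 := hrow t
    have h2 := hrow 0
    exact abs_le.mpr ⟨by simp [F]; linarith, by simp [F]; linarith⟩
  obtain ⟨a, ha⟩ := perturbed_recursion_tendsto F
    (stochastic_norm_mulVec_le (A 0) (hstoch 0)) hreg D hD
    (fun t => x t - S t • b - y t) (fun t => by
      refine le_of_eq_of_le (congrArg norm ?_) (hdrift t)
      have hSt : S (t + 1) = S t + u t := sum_range_succ u t
      have hbu : (fun p => α p * u t) ∘ c = u t • b := by
        ext i; simp [hb, mul_comm]
      simp only [hx', hbu, hy, hSt, map_sub, map_smul, add_smul, smul_sub]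
      abel)
  have hlim : ∀ j, Tendsto (fun t => x t j - (y t j + S t * b j + a j)) atTop (𝓝 0) := by
    intro j
    have h1 := (tendsto_pi_nhds.mp ha j).sub_const (a j)
    rw [sub_self] at h1
    refine h1.congr fun t => ?_
    simp only [Pi.sub_apply, Pi.smul_apply, smul_eq_mul]
    ring
  have hrep : ∀ p, ∃ V : ℕ → ℝ, (∀ t, V (t + T) = V t) ∧
      ∀ j ∈ C p, Tendsto (fun t => |x t j - V t|) atTop (𝓝 0) := by
    intro p
    rcases (C p).eq_empty_or_nonempty with hp | ⟨i, hi⟩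
    · exact ⟨0, fun _ => rfl, by simp [hp]⟩
    refine ⟨fun t => y t i + S t * b i + a i, fun t => by simp only [hyT, hST], fun j hj => ?_⟩
    have hij : c i = c j := ((hmem i p).mp hi).trans ((hmem j p).mp hj).symm
    have h1 : Tendsto (fun t => D t + |x t i - (y t i + S t * b i + a i)|) atTop (𝓝 0) := by
      simpa using hD.tendsto_atTop_zero.add (hlim i).abs
    refine squeeze_zero (fun _ => abs_nonneg _) (fun t => ?_) h1
    refine (abs_sub_le _ (x t i) _).trans (add_le_add_left ?_ _)
    exact abs_le.mpr ⟨by linarith [hxD t i j hij], hxD t j i hij.symm⟩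
  choose v hvT hv using hrep
  exact ⟨v, hvT, hv⟩
end
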